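/- Discrete Itô formula (Lemma 3.1, second identity). Let a ∈ ℝ^d, h > 0, and let f = (f¹,…,f^d) : h²ℤ₊ × G(a,h) → ℝ^d be a time-dependent vector field such that for each fixed t ∈ h²ℤ₊ the field f(t,·) is discrete conservative on G(a,h). Let X_r = (X_r¹,…,X_r^d) (r ≥ 1) with each X_r^j ∈ {−1,1}, set S_0 = a, S_n = a + h(X_1 + ⋯ + X_n), and t_r = r h². Then for every n ≥ 1: T_{S_0}^{S_n}(f(t_n,·), γ'₀) h = Σ_{r=1}^{n} T_{S_0}^{S_r}( f(t_r,·) − f(t_{r−1},·), γ'₀) h + Σ_{r=1}^{n} Σ_{j=1}^{d} f^j(t_{r−1}, S_{r−1} + Σ_{i=1}^{j−1} h X_r^i e_i) · h X_r^j + ½ Σ_{r=1}^{n} Σ_{j=1}^{d} [ f^j(t_{r−1}, S_{r−1} + Σ_{i=1}^{j} h X_r^i e_i) − f^j(t_{r−1}, S_{r−1} + Σ_{i=1}^{j−1} h X_r^i e_i) ] / (h X_r^j) · h². -/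

import Mathlib

/- Shared discrete-path infrastructure. -/

namespace DiscretePaths

/-- The sign `±1` associated to a boolean orientation. -/
noncomputable def sgn (b : Bool) : ℝ := if b then 1 else -1

/-- The vector `μ h e_j` of an oriented grid edge, where the edge is encoded as
`e = (j, b)` with `μ = sgn b`. -/
noncomputable def stepVec (d : ℕ) (h : ℝ) (e : Fin d × Bool) : Fin d → ℝ :=
  fun i => if i = e.1 then sgn e.2 * h else 0

/-- The endpoint of a discrete path starting at `b`, given by its list of oriented edges. -/
noncomputable def pathEnd (d : ℕ) (h : ℝ) (b : Fin d → ℝ) :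
    List (Fin d × Bool) → (Fin d → ℝ)
  | [] => b
  | e :: γ => pathEnd d h (fun i => b i + stepVec d h e i) γ

/-- The trapezoidal sum `T_γ(f, γ'₀) h` of the vector field `f` over the discrete path
starting at `b` with oriented edges `γ`. -/
noncomputable def trapSum (d : ℕ) (h : ℝ) (f : (Fin d → ℝ) → Fin d → ℝ)
    (b : Fin d → ℝ) : List (Fin d × Bool) → ℝ
  | [] => 0
  | e :: γ => h / 2 * sgn e.2 * (f b e.1 + f (fun i => b i + stepVec d h e i) e.1)
      + trapSum d h f (fun i => b i + stepVec d h e i) γ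

/-- Membership in the grid `G(a,h) = a + hℤ^d`. -/
def InGrid (d : ℕ) (a : Fin d → ℝ) (h : ℝ) (x : Fin d → ℝ) : Prop :=
  ∃ k : Fin d → ℤ, ∀ i, x i = a i + h * k i

/-- A vector field on the grid `G(a,h)` is discrete conservative if its trapezoidal sum
over every closed discrete path vanishes. -/
def DiscreteConservative (d : ℕ) (a : Fin d → ℝ) (h : ℝ)
    (f : (Fin d → ℝ) → Fin d → ℝ) : Prop :=
  ∀ b, InGrid d a h b → ∀ γ : List (Fin d × Bool), pathEnd d h b γ = b →
    trapSum d h f b γ = 0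

end DiscretePaths

open DiscretePaths

/-!
Consecutive points `S r` and `S (r + 1)` are opposite corners of a grid cube, joined by the
staircase which moves along `e_1, …, e_d` in turn. Telescoping over `r` with path independence
writes the left-hand side as the time increments of the field plus the trapezoidal sums over the
staircases. On an edge from `p` to `q`, the trapezoidal weight `(f p + f q) / 2` equals
`f p + (f q - f p) / 2`: the left-point term is the Itô sum, and since each displacement `±h`
squares to `h ^ 2`, the remainder is the correction term.
-/

namespace DiscretePaths

variable {d : ℕ} {h : ℝ}

theorem sum_Icc_one_eq_sum_range {M : Type*} [AddCommMonoid M] (g : ℕ → M) (n : ℕ) :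
    ∑ r ∈ Finset.Icc 1 n, g r = ∑ r ∈ Finset.range n, g (r + 1) := by
  rw [Finset.range_eq_Ico, Finset.sum_Ico_add' g 0 n 1]
  rfl

theorem exists_sgn_eq {x : ℝ} (hx : x = 1 ∨ x = -1) : ∃ s : Bool, sgn s = x :=
  hx.elim (fun hx => ⟨true, by simp [sgn, hx]⟩) (fun hx => ⟨false, by simp [sgn, hx]⟩)

theorem sgn_not (s : Bool) : sgn (!s) = -sgn s := by
  cases s <;> simp [sgn]

theorem sgn_mul_self (s : Bool) : sgn s * sgn s = 1 := by
  cases s <;> simp [sgn]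

theorem sgn_ne_zero (s : Bool) : sgn s ≠ 0 := by
  cases s <;> simp [sgn]

theorem stepVec_not (e : Fin d × Bool) : stepVec d h (e.1, !e.2) = -stepVec d h e := by
  funext i
  simp only [stepVec, sgn_not, Pi.neg_apply]
  split_ifs <;> ring

theorem pathEnd_nil (b : Fin d → ℝ) : pathEnd d h b [] = b := rfl

theorem pathEnd_cons (b : Fin d → ℝ) (e : Fin d × Bool) (γ : List (Fin d × Bool)) :
    pathEnd d h b (e :: γ) = pathEnd d h (b + stepVec d h e) γ := rfl

theorem trapSum_cons (f : (Fin d → ℝ) → Fin d → ℝ) (b : Fin d → ℝ) (e : Fin d × Bool)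
    (γ : List (Fin d × Bool)) :
    trapSum d h f b (e :: γ) =
      h / 2 * sgn e.2 * (f b e.1 + f (b + stepVec d h e) e.1) +
        trapSum d h f (b + stepVec d h e) γ := rfl

theorem pathEnd_eq_add_sum (b : Fin d → ℝ) (γ : List (Fin d × Bool)) :
    pathEnd d h b γ = b + (γ.map (stepVec d h)).sum := by
  induction γ generalizing b with
  | nil => simp [pathEnd_nil]
  | cons e γ ih => rw [pathEnd_cons, ih, List.map_cons, List.sum_cons, add_assoc]

theorem pathEnd_append (b : Fin d → ℝ) (γ δ : List (Fin d × Bool)) :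
    pathEnd d h b (γ ++ δ) = pathEnd d h (pathEnd d h b γ) δ := by
  simp only [pathEnd_eq_add_sum, List.map_append, List.sum_append, add_assoc]

theorem trapSum_append (f : (Fin d → ℝ) → Fin d → ℝ) (b : Fin d → ℝ)
    (γ δ : List (Fin d × Bool)) :
    trapSum d h f b (γ ++ δ) = trapSum d h f b γ + trapSum d h f (pathEnd d h b γ) δ := by
  induction γ generalizing b with
  | nil => simp [trapSum, pathEnd_nil]
  | cons e γ ih => rw [List.cons_append, trapSum_cons, ih, trapSum_cons, pathEnd_cons, add_assoc]

theorem trapSum_sub (f g : (Fin d → ℝ) → Fin d → ℝ) (b : Fin d → ℝ)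
    (γ : List (Fin d × Bool)) :
    trapSum d h (f - g) b γ = trapSum d h f b γ - trapSum d h g b γ := by
  induction γ generalizing b with
  | nil => simp [trapSum]
  | cons e γ ih => simp only [trapSum_cons, ih, Pi.sub_apply]; ring

/-- The discrete path `γ` traversed backwards: the edges in the opposite order, each with the
opposite orientation. Its starting point is the endpoint of `γ`. -/
def reversePath (γ : List (Fin d × Bool)) : List (Fin d × Bool) :=
  (γ.map fun e => (e.1, !e.2)).reverse

theorem reversePath_cons (e : Fin d × Bool) (γ : List (Fin d × Bool)) :
    reversePath (e :: γ) = reversePath γ ++ [(e.1, !e.2)] := by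
  simp [reversePath]

theorem pathEnd_reversePath (b : Fin d → ℝ) (γ : List (Fin d × Bool)) :
    pathEnd d h (pathEnd d h b γ) (reversePath γ) = b := by
  induction γ generalizing b with
  | nil => rfl
  | cons e γ ih =>
    rw [pathEnd_cons, reversePath_cons, pathEnd_append, ih, pathEnd_cons, stepVec_not,
      add_neg_cancel_right, pathEnd_nil]

theorem trapSum_reversePath (f : (Fin d → ℝ) → Fin d → ℝ) (b : Fin d → ℝ)
    (γ : List (Fin d × Bool)) :
    trapSum d h f (pathEnd d h b γ) (reversePath γ) = -trapSum d h f b γ := by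
  induction γ generalizing b with
  | nil => simp [reversePath, trapSum]
  | cons e γ ih =>
    rw [pathEnd_cons, reversePath_cons, trapSum_append, ih, pathEnd_reversePath, trapSum_cons,
      trapSum_cons, stepVec_not, add_neg_cancel_right, sgn_not, trapSum]
    ring

theorem inGrid_self (a : Fin d → ℝ) : InGrid d a h a :=
  ⟨0, by simp⟩

theorem DiscreteConservative.trapSum_eq {a b : Fin d → ℝ} {f : (Fin d → ℝ) → Fin d → ℝ}
    (hf : DiscreteConservative d a h f) (hb : InGrid d a h b) {γ δ : List (Fin d × Bool)}
    (hγδ : pathEnd d h b γ = pathEnd d h b δ) :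
    trapSum d h f b γ = trapSum d h f b δ := by
  have hloop : trapSum d h f b (γ ++ reversePath δ) = 0 :=
    hf b hb _ (by rw [pathEnd_append, hγδ, pathEnd_reversePath])
  rw [trapSum_append, hγδ, trapSum_reversePath] at hloop
  linarith

theorem trapSum_eq_sum_trapSum_sub_add_sum_trapSum {a b : Fin d → ℝ}
    {f : ℕ → (Fin d → ℝ) → Fin d → ℝ} (hf : ∀ t, DiscreteConservative d a h (f t))
    (hb : InGrid d a h b) {S : ℕ → Fin d → ℝ} (hS : S 0 = b)
    {γ : ℕ → List (Fin d × Bool)} (hγ : ∀ r, pathEnd d h b (γ r) = S r)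
    {δ : ℕ → List (Fin d × Bool)} (hδ : ∀ r, pathEnd d h (S r) (δ r) = S (r + 1)) (n : ℕ) :
    trapSum d h (f n) b (γ n) =
      ∑ r ∈ Finset.range n, trapSum d h (f (r + 1) - f r) b (γ (r + 1)) +
        ∑ r ∈ Finset.range n, trapSum d h (f r) (S r) (δ r) := by
  induction n with
  | zero => simpa using hf 0 b hb (γ 0) ((hγ 0).trans hS)
  | succ n ih =>
    have hspace : trapSum d h (f n) b (γ (n + 1)) =
        trapSum d h (f n) b (γ n) + trapSum d h (f n) (S n) (δ n) := by
      rw [(hf n).trapSum_eq hb (δ := γ n ++ δ n) (by rw [pathEnd_append, hγ, hγ, hδ]),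
        trapSum_append, hγ]
    have htime := trapSum_sub (h := h) (f (n + 1)) (f n) b (γ (n + 1))
    rw [Finset.sum_range_succ, Finset.sum_range_succ]
    linarith

theorem trapSum_ofFn (f : (Fin d → ℝ) → Fin d → ℝ) (b : Fin d → ℝ) {m : ℕ}
    (e : Fin m → Fin d × Bool) :
    trapSum d h f b (List.ofFn e) = ∑ k : Fin m, h / 2 * sgn (e k).2 *
      (f (pathEnd d h b ((List.ofFn e).take k)) (e k).1 +
        f (pathEnd d h b ((List.ofFn e).take (k + 1))) (e k).1) := by
  induction m generalizing b with
  | zero => simp [trapSum]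
  | succ m ih =>
    rw [List.ofFn_succ, trapSum_cons, ih, Fin.sum_univ_succ]
    simp [pathEnd_nil, pathEnd_cons]

/-- The discrete path that takes one step along each of `e_1, …, e_d` in this order, the `j`-th
edge having orientation `s j`. With `s` the signs of `X_r` it leads from `S_{r-1}` to `S_r`. -/
def staircase (s : Fin d → Bool) : List (Fin d × Bool) :=
  List.ofFn fun j => (j, s j)

theorem pathEnd_take_staircase (b : Fin d → ℝ) (s : Fin d → Bool) (k : ℕ) :
    pathEnd d h b ((staircase s).take k) =
      fun i => b i + if (i : ℕ) < k then h * sgn (s i) else 0 := by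
  funext i
  rw [pathEnd_eq_add_sum, staircase, List.map_take, List.map_ofFn, List.sum_take_ofFn]
  simp [stepVec, Finset.sum_apply, mul_comm]

theorem pathEnd_staircase (b : Fin d → ℝ) (s : Fin d → Bool) :
    pathEnd d h b (staircase s) = fun i => b i + h * sgn (s i) := by
  have hlen : (staircase s).take d = staircase s := List.take_of_length_le (by simp [staircase])
  simpa [hlen] using pathEnd_take_staircase (h := h) b s d

theorem trapezoid_eq_left_add_correction (hh : h ≠ 0) (s : Bool) (p q : ℝ) :
    h / 2 * sgn s * (p + q) = p * (h * sgn s) + 1 / 2 * ((q - p) / (h * sgn s) * h ^ 2) := by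
  have hdiv : (q - p) / (h * sgn s) * h ^ 2 = (q - p) * (h * sgn s) := by
    have hs := sgn_ne_zero s
    field_simp
    linear_combination (p - q) * sgn_mul_self s
  rw [hdiv]
  ring

theorem trapSum_staircase (hh : h ≠ 0) (f : (Fin d → ℝ) → Fin d → ℝ) (b : Fin d → ℝ)
    (s : Fin d → Bool) :
    trapSum d h f b (staircase s) =
      (∑ j : Fin d, f (fun i => b i + if (i : ℕ) < (j : ℕ) then h * sgn (s i) else 0) j *
        (h * sgn (s j))) +
      1 / 2 * ∑ j : Fin d,
        (f (fun i => b i + if (i : ℕ) ≤ (j : ℕ) then h * sgn (s i) else 0) j -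
          f (fun i => b i + if (i : ℕ) < (j : ℕ) then h * sgn (s i) else 0) j) /
          (h * sgn (s j)) * h ^ 2 := by
  rw [staircase, trapSum_ofFn, ← staircase, Finset.mul_sum, ← Finset.sum_add_distrib]
  refine Finset.sum_congr rfl fun j _ => ?_
  rw [trapezoid_eq_left_add_correction hh, pathEnd_take_staircase, pathEnd_take_staircase]
  simp only [Nat.lt_succ_iff]

end DiscretePaths

/-- **Discrete Itô formula** (Lemma 3.1, second identity).  Since `f(t,·)` is discrete
conservative for each `t`, trapezoidal sums between two grid points are path
independent; accordingly the identity is stated for an arbitrary discrete path `γ` from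
`S_0 = a` to `S_n` and arbitrary discrete paths `γr r` from `S_0` to `S_r`. -/
theorem discrete_ito
    (d : ℕ) (a : Fin d → ℝ) (h : ℝ) (hh : 0 < h)
    (f : ℕ → (Fin d → ℝ) → Fin d → ℝ)
    (hf : ∀ t : ℕ, DiscreteConservative d a h (f t))
    (X : ℕ → Fin d → ℝ)
    (hX : ∀ r : ℕ, ∀ j : Fin d, X r j = 1 ∨ X r j = -1)
    (S : ℕ → Fin d → ℝ)
    (hS : ∀ n i, S n i = a i + h * ∑ r ∈ Finset.range n, X (r + 1) i)
    (n : ℕ) (hn : 1 ≤ n)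
    (γ : List (Fin d × Bool)) (hγ : pathEnd d h a γ = S n)
    (γr : ℕ → List (Fin d × Bool)) (hγr : ∀ r, pathEnd d h a (γr r) = S r) :
    trapSum d h (f n) a γ
      = (∑ r ∈ Finset.Icc 1 n,
          trapSum d h (fun x j => f r x j - f (r - 1) x j) a (γr r))
        + (∑ r ∈ Finset.Icc 1 n, ∑ j : Fin d,
            f (r - 1) (fun i => S (r - 1) i + if (i : ℕ) < (j : ℕ) then h * X r i else 0) j
              * (h * X r j))
        + 1 / 2 * ∑ r ∈ Finset.Icc 1 n, ∑ j : Fin d,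
            (f (r - 1) (fun i => S (r - 1) i + if (i : ℕ) ≤ (j : ℕ) then h * X r i else 0) j
              - f (r - 1) (fun i => S (r - 1) i + if (i : ℕ) < (j : ℕ) then h * X r i else 0) j)
              / (h * X r j) * h ^ 2 := by
  choose s hs using fun r j => exists_sgn_eq (hX r j)
  obtain rfl : (fun r j => sgn (s r j)) = X := funext₂ hs
  have hS_zero : S 0 = a := by funext i; simp [hS]
  have hS_succ (r : ℕ) : pathEnd d h (S r) (staircase (s (r + 1))) = S (r + 1) := by
    rw [pathEnd_staircase]
    funext i
    rw [hS, hS, Finset.sum_range_succ, mul_add, add_assoc]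
  rw [(hf n).trapSum_eq (inGrid_self a) (hγ.trans (hγr n).symm),
    trapSum_eq_sum_trapSum_sub_add_sum_trapSum hf (inGrid_self a) hS_zero hγr hS_succ]
  simp only [trapSum_staircase hh.ne', Finset.sum_add_distrib, ← Finset.mul_sum, ← add_assoc,
    sum_Icc_one_eq_sum_range, Nat.add_sub_cancel]
  rfl
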